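/- arXiv:1106.0404 — 7 statements merged into one kernel-verified Lean document; each statement's English description precedes it below -/
import Mathlib

section
/- Let F be a subfunctor of V that preserves intersections, let X be a compact Hausdorff space, B ⊆ X a closed nonempty subset, and ν ∈ F(X). Then ν ∈ V(i_B)(F(B)) (where i_B : B → X is the inclusion) if and only if ν(φ₁) = ν(φ₂) for every φ₁, φ₂ ∈ C(X) with φ₁|_B = φ₂|_B. -/
open Topology

universe u

/-- `V(X)`: the set of all functionals `ν : C(X, ℝ) → ℝ` (not assumed linear or continuous)
with `min φ(X) ≤ ν(φ) ≤ max φ(X)` for every `φ ∈ C(X)`. -/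
def VSet (X : Type u) [TopologicalSpace X] : Set (C(X, ℝ) → ℝ) :=
  {ν | ∀ φ : C(X, ℝ), sInf (Set.range φ) ≤ ν φ ∧ ν φ ≤ sSup (Set.range φ)}

/-- `V(f)(ν)(ψ) = ν(ψ ∘ f)` for a continuous map `f : X → Y`. -/
def Vmap {X Y : Type u} [TopologicalSpace X] [TopologicalSpace Y] (f : C(X, Y))
    (ν : C(X, ℝ) → ℝ) : C(Y, ℝ) → ℝ :=
  fun ψ => ν (ψ.comp f)

/-- The inclusion of a subset `B ⊆ X` as a continuous map. -/
def inclCM {X : Type u} [TopologicalSpace X] (B : Set X) : C(B, X) :=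
  ⟨Subtype.val, continuous_subtype_val⟩

/-- A subfunctor `F` of the functor `V`: an assignment of a subset `F(X) ⊆ V(X)` to every
compact Hausdorff space `X` such that `V(f)(F(X)) ⊆ F(Y)` for every continuous `f : X → Y`. -/
structure VSubfunctor : Type (u + 1) where
  carrier : ∀ (X : Type u) [TopologicalSpace X] [CompactSpace X] [T2Space X],
    Set (C(X, ℝ) → ℝ)
  subset_V : ∀ (X : Type u) [TopologicalSpace X] [CompactSpace X] [T2Space X],
    carrier X ⊆ VSet X
  map_mem : ∀ (X Y : Type u) [TopologicalSpace X] [CompactSpace X] [T2Space X]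
    [TopologicalSpace Y] [CompactSpace Y] [T2Space Y] (f : C(X, Y)) (ν : C(X, ℝ) → ℝ),
    ν ∈ carrier X → Vmap f ν ∈ carrier Y

/-- `F(B)`, identified with its copy `V(i_B)(F(B)) ⊆ F(X)`, for a closed subset `B` of a
compact Hausdorff space `X`. -/
def VSubfunctor.sub (F : VSubfunctor.{u}) (X : Type u) [TopologicalSpace X] [CompactSpace X]
    [T2Space X] (B : Set X) (hB : IsClosed B) : Set (C(X, ℝ) → ℝ) :=
  haveI : CompactSpace B := isCompact_iff_compactSpace.mp hB.isCompact
  Vmap (inclCM B) '' F.carrier ↥B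

/-- A subfunctor `F` of `V` preserves intersections if `F(⋂ᵢ Sᵢ) = ⋂ᵢ F(Sᵢ)` (under the
identifications above) for every (nonempty) family of closed subsets of a compact Hausdorff
space. -/
def VSubfunctor.PreservesIntersections (F : VSubfunctor.{u}) : Prop :=
  ∀ (X : Type u) [TopologicalSpace X] [CompactSpace X] [T2Space X]
    (ι : Type u) [Nonempty ι] (S : ι → Set X) (hS : ∀ i, IsClosed (S i)),
    F.sub X (⋂ i, S i) (isClosed_iInter hS) = ⋂ i, F.sub X (S i) (hS i)

/-! Two copies of `X` inside a compact Hausdorff space, glued exactly along `B`, meet in a copy of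
`B`. If `ν φ` depends only on the restriction of `φ` to `B`, then the images of `ν` under the two
embeddings coincide, so this common image lies in `F` of both copies and hence in `F` of their
intersection; retracting the two copies onto `X` returns `ν`, now as an element of `F(B)`. The two
copies are the graphs of two maps from `X` to a Tychonoff cube that agree exactly on `B`. -/

theorem vmap_comp {X Y Z : Type u} [TopologicalSpace X] [TopologicalSpace Y] [TopologicalSpace Z]
    (g : C(Y, Z)) (f : C(X, Y)) (ν : C(X, ℝ) → ℝ) : Vmap (g.comp f) ν = Vmap g (Vmap f ν) :=
  rfl

theorem vmap_eq_vmap_of_eqOn {X Y : Type u} [TopologicalSpace X] [TopologicalSpace Y] {B : Set X}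
    {f g : C(X, Y)} (hfg : Set.EqOn f g B) {ν : C(X, ℝ) → ℝ}
    (hν : ∀ φ₁ φ₂ : C(X, ℝ), Set.EqOn φ₁ φ₂ B → ν φ₁ = ν φ₂) : Vmap f ν = Vmap g ν :=
  funext fun ψ => hν _ _ (hfg.comp_left (g := ψ))

theorem exists_forall_eq_iff_mem_of_isClosed {X : Type u} [TopologicalSpace X]
    [CompletelyRegularSpace X] {B : Set X} (hB : IsClosed B) :
    ∃ (ι : Type u) (f g : C(X, ι → unitInterval)), ∀ x, f x = g x ↔ x ∈ B := by
  let ι := {h : C(X, unitInterval) // Set.EqOn h 1 B}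
  let eval : C(X, ι → unitInterval) :=
    ⟨fun x h => h.1 x, continuous_pi fun h => h.1.continuous⟩
  refine ⟨ι, eval, 1, fun x => ⟨fun hx => ?_, fun hx => funext fun h => h.2 hx⟩⟩
  by_contra hxB
  obtain ⟨h, h_cont, hx_zero, hB_one⟩ :=
    CompletelyRegularSpace.completely_regular x B hB hxB
  have hx_one : h x = 1 := congrFun hx ⟨⟨h, h_cont⟩, hB_one⟩
  exact zero_ne_one (hx_zero.symm.trans hx_one)

namespace VSubfunctor

/-- `F` preserves binary intersections: `F(A ∩ B) = F(A) ∩ F(B)` in `F(X)`, for closed subsets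
`A` and `B` of a compact Hausdorff space `X`. This is the form of the intersection property that
is applied to two glued copies of a space. -/
def PreservesBinaryIntersections (F : VSubfunctor.{u}) : Prop :=
  ∀ (X : Type u) [TopologicalSpace X] [CompactSpace X] [T2Space X]
    (A B : Set X) (hA : IsClosed A) (hB : IsClosed B),
    F.sub X (A ∩ B) (hA.inter hB) = F.sub X A hA ∩ F.sub X B hB

theorem PreservesIntersections.preservesBinaryIntersections {F : VSubfunctor.{u}}
    (hF : F.PreservesIntersections) : F.PreservesBinaryIntersections := by
  intro X _ _ _ A B hA hB
  let S : ULift.{u} Bool → Set X := fun b => cond b.down A B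
  have hS : ∀ b, IsClosed (S b) := by
    rintro ⟨_ | _⟩
    exacts [hB, hA]
  have hAB : A ∩ B = ⋂ b, S b := by
    rw [Set.inter_eq_iInter, ← Equiv.ulift.{u}.surjective.iInter_comp]
    rfl
  calc F.sub X (A ∩ B) (hA.inter hB)
      = F.sub X (⋂ b, S b) (isClosed_iInter hS) := by congr 1
    _ = ⋂ b, F.sub X (S b) (hS b) := hF X _ S hS
    _ = F.sub X A hA ∩ F.sub X B hB := by
      ext ν
      simp only [Set.mem_iInter, ULift.forall, Bool.forall_bool, Set.mem_inter_iff]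
      exact and_comm

variable {F : VSubfunctor.{u}} {X Y : Type u}
  [TopologicalSpace X] [CompactSpace X] [T2Space X]
  [TopologicalSpace Y] [CompactSpace Y] [T2Space Y] {ν : C(X, ℝ) → ℝ}

theorem eq_of_mem_sub_of_eqOn {B : Set X} {hB : IsClosed B} (hν : ν ∈ F.sub X B hB)
    {φ₁ φ₂ : C(X, ℝ)} (hφ : Set.EqOn φ₁ φ₂ B) : ν φ₁ = ν φ₂ := by
  obtain ⟨μ, -, rfl⟩ := hν
  exact congrArg μ (ContinuousMap.ext fun b => hφ b.2)

theorem vmap_mem_sub_of_forall_mem {S : Set Y} (hS : IsClosed S) {f : C(X, Y)} (hf : ∀ x, f x ∈ S)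
    (hν : ν ∈ F.carrier X) : Vmap f ν ∈ F.sub Y S hS := by
  have : CompactSpace S := isCompact_iff_compactSpace.mp hS.isCompact
  exact ⟨Vmap ⟨fun x => ⟨f x, hf x⟩, f.continuous.subtype_mk hf⟩ ν, F.map_mem _ _ _ _ hν, rfl⟩

theorem vmap_mem_sub_of_mapsTo {A : Set X} {hA : IsClosed A} {S : Set Y} (hS : IsClosed S)
    {f : C(X, Y)} (hf : Set.MapsTo f A S) (hν : ν ∈ F.sub X A hA) : Vmap f ν ∈ F.sub Y S hS := by
  have : CompactSpace A := isCompact_iff_compactSpace.mp hA.isCompact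
  obtain ⟨μ, hμ, rfl⟩ := hν
  rw [← vmap_comp]
  exact vmap_mem_sub_of_forall_mem hS (fun a => hf a.2) hμ

theorem vmap_mem_sub_range (f : C(X, Y)) (hν : ν ∈ F.carrier X) :
    Vmap f ν ∈ F.sub Y (Set.range f) (isCompact_range f.continuous).isClosed :=
  vmap_mem_sub_of_forall_mem _ Set.mem_range_self hν

theorem PreservesBinaryIntersections.mem_sub_of_vmap_eq (hF : F.PreservesBinaryIntersections)
    {f g : C(X, Y)} {r : C(Y, X)} (hrf : Function.LeftInverse r f)
    (hrg : Function.LeftInverse r g) {B : Set X} (hB : IsClosed B) (hfgB : ∀ x, f x = g x → x ∈ B)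
    (hν : ν ∈ F.carrier X) (hfg : Vmap f ν = Vmap g ν) : ν ∈ F.sub X B hB := by
  have hmem : Vmap f ν ∈ F.sub Y (Set.range f ∩ Set.range g) _ :=
    (hF Y _ _ _ _).superset ⟨vmap_mem_sub_range f hν, hfg ▸ vmap_mem_sub_range g hν⟩
  have hmaps : Set.MapsTo r (Set.range f ∩ Set.range g) B := by
    rintro _ ⟨⟨x, rfl⟩, ⟨y, hyx⟩⟩
    have hxy : y = x := by rw [← hrg y, hyx, hrf x]
    rw [hrf x]
    exact hfgB x (hxy ▸ hyx.symm)
  have hret : Vmap r (Vmap f ν) = ν := by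
    rw [← vmap_comp, show r.comp f = ContinuousMap.id X from ContinuousMap.ext hrf]
    rfl
  exact hret ▸ vmap_mem_sub_of_mapsTo _ hmaps hmem

theorem PreservesBinaryIntersections.mem_sub_of_forall_eqOn (hF : F.PreservesBinaryIntersections)
    {B : Set X} (hB : IsClosed B) (hν : ν ∈ F.carrier X)
    (h : ∀ φ₁ φ₂ : C(X, ℝ), Set.EqOn φ₁ φ₂ B → ν φ₁ = ν φ₂) : ν ∈ F.sub X B hB := by
  obtain ⟨ι, f, g, hfg⟩ := exists_forall_eq_iff_mem_of_isClosed hB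
  let graph (k : C(X, ι → unitInterval)) := (ContinuousMap.id X).prodMk k
  have hgraph : Set.EqOn (graph f) (graph g) B := fun x hx => Prod.ext rfl ((hfg x).2 hx)
  exact hF.mem_sub_of_vmap_eq (r := ContinuousMap.fst) (fun _ => rfl) (fun _ => rfl) hB
    (fun x hx => (hfg x).1 (congrArg Prod.snd hx)) hν (vmap_eq_vmap_of_eqOn hgraph h)

end VSubfunctor

theorem stmt9_general {F : VSubfunctor.{u}} (hF : F.PreservesBinaryIntersections)
    {X : Type u} [TopologicalSpace X] [CompactSpace X] [T2Space X]
    {B : Set X} (hB : IsClosed B) {ν : C(X, ℝ) → ℝ} (hν : ν ∈ F.carrier X) :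
    ν ∈ F.sub X B hB ↔
      ∀ φ₁ φ₂ : C(X, ℝ), Set.EqOn (φ₁ : X → ℝ) (φ₂ : X → ℝ) B → ν φ₁ = ν φ₂ :=
  ⟨fun hmem _ _ => VSubfunctor.eq_of_mem_sub_of_eqOn hmem, hF.mem_sub_of_forall_eqOn hB hν⟩

/-- For a subfunctor `F` of `V` preserving intersections, a compact Hausdorff
space `X`, a closed nonempty `B ⊆ X` and `ν ∈ F(X)`: `ν ∈ F(B)` (i.e. `ν ∈ V(i_B)(F(B))`) iff
`ν(φ₁) = ν(φ₂)` for all `φ₁, φ₂ ∈ C(X)` which agree on `B`. -/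
theorem stmt9 (F : VSubfunctor.{u}) (hint : F.PreservesIntersections)
    (X : Type u) [TopologicalSpace X] [CompactSpace X] [T2Space X]
    (B : Set X) (hB : IsClosed B) (hne : B.Nonempty)
    (ν : C(X, ℝ) → ℝ) (hν : ν ∈ F.carrier X) :
    ν ∈ F.sub X B hB ↔
      ∀ φ₁ φ₂ : C(X, ℝ), Set.EqOn (φ₁ : X → ℝ) (φ₂ : X → ℝ) B → ν φ₁ = ν φ₂ :=
  stmt9_general hint.preservesBinaryIntersections hB hν
end

section
/- Let X be a compact Hausdorff space, B ⊆ X a closed nonempty subset, and ν ∈ EA(X). Then there exists ν₀ ∈ EA(B) with ν(φ) = ν₀(φ|_B) for every φ ∈ C(X) if and only if ν(φ₁) = ν(φ₂) for every φ₁, φ₂ ∈ C(X) with φ₁|_B = φ₂|_B. -/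
/-!
On `C(X, ℝ)` the elements of `EA(X)` are exactly the monotone, weakly additive functionals
vanishing at `0`. If such a `ν` depends only on the pullback of `φ` along a continuous map
`f : Y → X`, extend it to `C(Y, ℝ)` by `g ↦ inf {ν φ | g ≤ φ ∘ f}`. This infimum is monotone and
weakly additive for formal reasons. It returns `ν φ` at `φ ∘ f`: if `φ ∘ f ≤ ψ ∘ f`, then `φ ⊔ ψ`
and `ψ` have the same pullback, so `ν φ ≤ ν (φ ⊔ ψ) = ν ψ`.
-/

open Topology

universe u

/-- `EA(X)`: the set of all functionals `ν : C(X, ℝ) → ℝ` (not assumed linear or continuous)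
with `min φ(X) ≤ ν(φ) ≤ max φ(X)` for every `φ ∈ C(X)` which are non-expanding
(`|ν(φ) - ν(ψ)| ≤ ‖φ - ψ‖`) and weakly additive (`ν(φ + c·1_X) = ν(φ) + c`). -/
noncomputable def EASet (X : Type u) [TopologicalSpace X] [CompactSpace X] :
    Set (C(X, ℝ) → ℝ) :=
  {ν | (∀ φ : C(X, ℝ), sInf (Set.range φ) ≤ ν φ ∧ ν φ ≤ sSup (Set.range φ)) ∧
       (∀ φ ψ : C(X, ℝ), |ν φ - ν ψ| ≤ ‖φ - ψ‖) ∧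
       (∀ (φ : C(X, ℝ)) (c : ℝ), ν (φ + ContinuousMap.const X c) = ν φ + c)}

/-- A functional on `C(X, ℝ)` is weakly additive if it commutes with adding constants; this
is the last condition in the definition of `EASet`. -/
def IsWeaklyAdditive {X : Type*} [TopologicalSpace X] (ν : C(X, ℝ) → ℝ) : Prop :=
  ∀ (φ : C(X, ℝ)) (c : ℝ), ν (φ + ContinuousMap.const X c) = ν φ + c

namespace IsWeaklyAdditive

variable {X : Type*} [TopologicalSpace X] {ν : C(X, ℝ) → ℝ}

theorem nonempty (hν : IsWeaklyAdditive ν) : Nonempty X := by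
  by_contra hX
  rw [not_nonempty_iff] at hX
  have h := hν 0 1
  rw [Subsingleton.elim (0 + ContinuousMap.const X 1) (0 : C(X, ℝ))] at h
  linarith

theorem map_const (hν : IsWeaklyAdditive ν) (h0 : ν 0 = 0) (c : ℝ) :
    ν (ContinuousMap.const X c) = c := by
  simpa only [zero_add, h0] using hν 0 c

variable [CompactSpace X]

-- If `φ ≤ ψ`, shifting `ψ` down by `‖ψ - φ‖ / 2` brings it within `‖ψ - φ‖ / 2` of `φ`.
theorem monotone_of_nonexpanding (hν : IsWeaklyAdditive ν)
    (hexp : ∀ φ ψ : C(X, ℝ), |ν φ - ν ψ| ≤ ‖φ - ψ‖) : Monotone ν := by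
  intro φ ψ hle
  set r := ‖ψ - φ‖ / 2 with hr
  have hnorm : ‖ψ + ContinuousMap.const X (-r) - φ‖ ≤ r := by
    refine (ContinuousMap.norm_le _ (by positivity)).2 fun x ↦ abs_le.2 ?_
    have hx : (ψ - φ) x ≤ ‖ψ - φ‖ := ContinuousMap.apply_le_norm _ x
    have hlex : φ x ≤ ψ x := hle x
    simp only [ContinuousMap.sub_apply, ContinuousMap.add_apply,
      ContinuousMap.const_apply] at hx ⊢
    constructor <;> linarith
  have hdist := (abs_le.1 ((hexp _ _).trans hnorm)).1
  rw [hν] at hdist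
  linarith

theorem sub_le_norm_sub (hν : IsWeaklyAdditive ν) (hmono : Monotone ν) (φ ψ : C(X, ℝ)) :
    ν φ - ν ψ ≤ ‖φ - ψ‖ := by
  have hle : φ ≤ ψ + ContinuousMap.const X ‖φ - ψ‖ := fun x ↦
    sub_le_iff_le_add'.1 (ContinuousMap.apply_le_norm (φ - ψ) x)
  have hνle := hmono hle
  rw [hν] at hνle
  linarith

theorem nonexpanding_of_monotone (hν : IsWeaklyAdditive ν) (hmono : Monotone ν)
    (φ ψ : C(X, ℝ)) : |ν φ - ν ψ| ≤ ‖φ - ψ‖ :=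
  abs_sub_le_iff.2
    ⟨hν.sub_le_norm_sub hmono φ ψ, norm_sub_rev φ ψ ▸ hν.sub_le_norm_sub hmono ψ φ⟩

theorem mem_Icc_of_monotone (hν : IsWeaklyAdditive ν) (h0 : ν 0 = 0) (hmono : Monotone ν)
    (φ : C(X, ℝ)) : ν φ ∈ Set.Icc (sInf (Set.range φ)) (sSup (Set.range φ)) := by
  have hrange : IsCompact (Set.range φ) := isCompact_range φ.continuous
  have hlower : ContinuousMap.const X (sInf (Set.range φ)) ≤ φ := fun x ↦
    csInf_le hrange.bddBelow (Set.mem_range_self x)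
  have hupper : φ ≤ ContinuousMap.const X (sSup (Set.range φ)) := fun x ↦
    le_csSup hrange.bddAbove (Set.mem_range_self x)
  constructor
  · simpa only [hν.map_const h0] using hmono hlower
  · simpa only [hν.map_const h0] using hmono hupper

end IsWeaklyAdditive

theorem mem_EASet_iff_monotone {X : Type*} [TopologicalSpace X] [CompactSpace X]
    {ν : C(X, ℝ) → ℝ} : ν ∈ EASet X ↔ Monotone ν ∧ IsWeaklyAdditive ν ∧ ν 0 = 0 := by
  constructor
  · rintro ⟨hbounds, hexp, hadd : IsWeaklyAdditive ν⟩
    have := hadd.nonempty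
    have h0 : ν 0 = 0 := by
      have h := hbounds 0
      simp only [ContinuousMap.coe_zero, Set.range_zero, csInf_singleton, csSup_singleton] at h
      exact le_antisymm h.2 h.1
    exact ⟨hadd.monotone_of_nonexpanding hexp, hadd, h0⟩
  · rintro ⟨hmono, hadd, h0⟩
    exact ⟨hadd.mem_Icc_of_monotone h0 hmono, hadd.nonexpanding_of_monotone hmono, hadd⟩

/-- The majorants of `g : C(Y, ℝ)` along a continuous map `f : Y → X`: the functions on `X` whose
pullback along `f` dominates `g`. -/
def majorants {X Y : Type*} [TopologicalSpace X] [TopologicalSpace Y] (f : C(Y, X))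
    (g : C(Y, ℝ)) : Set C(X, ℝ) :=
  {φ | g ≤ φ.comp f}

/-- The upper extension of a functional `ν` on `C(X, ℝ)` to `C(Y, ℝ)` along a continuous map
`f : Y → X`: the infimum of `ν` over the majorants of `g`. By convention it is `0`
when there are no majorants or `ν` is unbounded below on them. -/
noncomputable def upperExtension {X Y : Type*} [TopologicalSpace X] [TopologicalSpace Y]
    (f : C(Y, X)) (ν : C(X, ℝ) → ℝ) (g : C(Y, ℝ)) : ℝ :=
  sInf (ν '' majorants f g)

section UpperExtension

variable {X Y : Type*} [TopologicalSpace X] [TopologicalSpace Y] {f : C(Y, X)} {ν : C(X, ℝ) → ℝ}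

theorem le_of_comp_le_comp (hmono : Monotone ν)
    (hfac : ν.FactorsThrough fun φ ↦ φ.comp f) {φ ψ : C(X, ℝ)} (h : φ.comp f ≤ ψ.comp f) :
    ν φ ≤ ν ψ := by
  have hsup : (φ ⊔ ψ).comp f = ψ.comp f := ContinuousMap.ext fun y ↦ sup_eq_right.2 (h y)
  calc
    ν φ ≤ ν (φ ⊔ ψ) := hmono le_sup_left
    _ = ν ψ := hfac hsup

theorem upperExtension_comp (hmono : Monotone ν)
    (hfac : ν.FactorsThrough fun φ ↦ φ.comp f) (φ : C(X, ℝ)) :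
    upperExtension f ν (φ.comp f) = ν φ := by
  have hleast : IsLeast (ν '' majorants f (φ.comp f)) (ν φ) :=
    ⟨Set.mem_image_of_mem ν (le_refl (φ.comp f)),
      Set.forall_mem_image.2 fun _ ↦ le_of_comp_le_comp hmono hfac⟩
  exact hleast.csInf_eq

theorem image_majorants_add_const (hadd : IsWeaklyAdditive ν) (g : C(Y, ℝ)) (c : ℝ) :
    ν '' majorants f (g + ContinuousMap.const Y c) =
      OrderIso.addRight c '' (ν '' majorants f g) := by
  ext t
  simp only [Set.mem_image, exists_exists_and_eq_and, OrderIso.addRight_apply]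
  constructor
  · rintro ⟨φ, hφ, rfl⟩
    refine ⟨φ + ContinuousMap.const X (-c), fun y ↦ ?_, by rw [hadd, neg_add_cancel_right]⟩
    exact le_add_neg_iff_add_le.2 (hφ y)
  · rintro ⟨φ, hφ, rfl⟩
    exact ⟨φ + ContinuousMap.const X c, fun y ↦ add_le_add_left (hφ y) c, hadd φ c⟩

variable [CompactSpace Y]

theorem majorants_nonempty (f : C(Y, X)) (g : C(Y, ℝ)) : (majorants f g).Nonempty :=
  ⟨ContinuousMap.const X ‖g‖, fun y ↦ g.apply_le_norm y⟩

theorem bddBelow_image_majorants (hmono : Monotone ν)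
    (hfac : ν.FactorsThrough fun φ ↦ φ.comp f) (g : C(Y, ℝ)) :
    BddBelow (ν '' majorants f g) := by
  refine ⟨ν (ContinuousMap.const X (-‖g‖)), Set.forall_mem_image.2 fun φ hφ ↦ ?_⟩
  exact le_of_comp_le_comp hmono hfac fun y ↦ (g.neg_norm_le_apply y).trans (hφ y)

theorem monotone_upperExtension (hmono : Monotone ν)
    (hfac : ν.FactorsThrough fun φ ↦ φ.comp f) : Monotone (upperExtension f ν) :=
  fun g₁ g₂ hg ↦ csInf_le_csInf (bddBelow_image_majorants hmono hfac g₁)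
    ((majorants_nonempty f g₂).image ν) (Set.image_mono fun _ hφ ↦ hg.trans hφ)

theorem isWeaklyAdditive_upperExtension (hmono : Monotone ν)
    (hfac : ν.FactorsThrough fun φ ↦ φ.comp f) (hadd : IsWeaklyAdditive ν) :
    IsWeaklyAdditive (upperExtension f ν) := by
  intro g c
  rw [upperExtension, image_majorants_add_const hadd]
  exact ((OrderIso.addRight c).map_csInf' ((majorants_nonempty f g).image ν)
    (bddBelow_image_majorants hmono hfac g)).symm

theorem upperExtension_mem_EASet [CompactSpace X] (hν : ν ∈ EASet X)
    (hfac : ν.FactorsThrough fun φ ↦ φ.comp f) : upperExtension f ν ∈ EASet Y := by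
  obtain ⟨hmono, hadd, h0⟩ := mem_EASet_iff_monotone.1 hν
  exact mem_EASet_iff_monotone.2 ⟨monotone_upperExtension hmono hfac,
    isWeaklyAdditive_upperExtension hmono hfac hadd, (upperExtension_comp hmono hfac 0).trans h0⟩

end UpperExtension

theorem stmt10_general {X Y : Type*} [TopologicalSpace X] [CompactSpace X] [TopologicalSpace Y]
    [CompactSpace Y] (f : C(Y, X)) {ν : C(X, ℝ) → ℝ} (hν : ν ∈ EASet X) :
    (∃ ν₀ ∈ EASet Y, ∀ φ : C(X, ℝ), ν φ = ν₀ (φ.comp f)) ↔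
      ∀ φ₁ φ₂ : C(X, ℝ), φ₁.comp f = φ₂.comp f → ν φ₁ = ν φ₂ := by
  constructor
  · rintro ⟨ν₀, -, hν₀⟩ φ₁ φ₂ hφ
    rw [hν₀, hν₀, hφ]
  · intro hfac
    have hmono := (mem_EASet_iff_monotone.1 hν).1
    exact ⟨upperExtension f ν, upperExtension_mem_EASet hν hfac,
      fun φ ↦ (upperExtension_comp hmono hfac φ).symm⟩

/-- For a compact Hausdorff space `X`, a closed nonempty `B ⊆ X` and
`ν ∈ EA(X)`: there exists `ν₀ ∈ EA(B)` with `ν(φ) = ν₀(φ|_B)` for all `φ ∈ C(X)` iff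
`ν(φ₁) = ν(φ₂)` for all `φ₁, φ₂ ∈ C(X)` which agree on `B`. -/
theorem stmt10 (X : Type u) [TopologicalSpace X] [CompactSpace X] [T2Space X]
    (B : Set X) (hB : IsClosed B) (hne : B.Nonempty)
    (ν : C(X, ℝ) → ℝ) (hν : ν ∈ EASet X) :
    (haveI : CompactSpace B := isCompact_iff_compactSpace.mp hB.isCompact
      ∃ ν₀ ∈ EASet (↥B), ∀ φ : C(X, ℝ), ν φ = ν₀ (φ.restrict B)) ↔
      ∀ φ₁ φ₂ : C(X, ℝ), Set.EqOn (φ₁ : X → ℝ) (φ₂ : X → ℝ) B → ν φ₁ = ν φ₂ := by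
  have : CompactSpace B := isCompact_iff_compactSpace.mp hB.isCompact
  simpa only [← DFunLike.coe_fn_eq, ← Set.domRestrict_eq_domRestrict_iff] using!
    stmt10_general ⟨((↑) : B → X), continuous_subtype_val⟩ hν
end

section
/- Let f : X → Y be a continuous map of compact Hausdorff spaces and B ⊆ Y a closed nonempty subset such that the restriction of f to f⁻¹(B) is a homeomorphism onto B. Let μ ∈ EA(X) be such that μ(ψ₁ ∘ f) = μ(ψ₂ ∘ f) for all ψ₁, ψ₂ ∈ C(Y) with ψ₁|_B = ψ₂|_B. Then μ(φ₁) = μ(φ₂) for all φ₁, φ₂ ∈ C(X) with φ₁|_{f⁻¹(B)} = φ₂|_{f⁻¹(B)}. (That is, the functor EA preserves 1-preimages.) -/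
open Topology

universe u

/-!
A non-expanding weakly additive functional `μ` is monotone. If `φ` agrees with `ψ ∘ f` on `f⁻¹(B)`,
then for every `ε > 0` an Urysohn function on `Y` gives `θ ∈ C(Y)` vanishing on `B` with
`(ψ - θ) ∘ f - ε ≤ φ ≤ (ψ + θ) ∘ f + ε`. Since `μ` does not distinguish `(ψ ± θ) ∘ f` from `ψ ∘ f`,
monotonicity forces `μ φ = μ (ψ ∘ f)`. Such a `ψ` exists because `f` embeds `f⁻¹(B)` as a closed
subset of `Y`, from which `φ` extends by Tietze's theorem; it depends only on `φ|_{f⁻¹(B)}`.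
-/

section

universe v

variable {X : Type*} {Y : Type u} [TopologicalSpace X] [CompactSpace X] [TopologicalSpace Y]
  {μ : C(X, ℝ) → ℝ}

theorem monotone_of_nonexpanding_of_weaklyAdditive
    (hnonexp : ∀ φ ψ : C(X, ℝ), |μ φ - μ ψ| ≤ ‖φ - ψ‖)
    (hadd : ∀ (φ : C(X, ℝ)) (c : ℝ), μ (φ + ContinuousMap.const X c) = μ φ + c) :
    Monotone μ := by
  intro φ ψ hle
  -- Shifting `φ` by half of `‖ψ - φ‖` centres the values of `ψ - φ`, which lie in `[0, ‖ψ - φ‖]`.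
  set c : ℝ := ‖ψ - φ‖ / 2 with hc
  have hdist : ‖φ + ContinuousMap.const X c - ψ‖ ≤ c := by
    rw [ContinuousMap.norm_le _ (by positivity)]
    intro x
    have hx : φ x ≤ ψ x := hle x
    have hx' : ψ x - φ x ≤ ‖ψ - φ‖ := (ψ - φ).apply_le_norm x
    simp only [ContinuousMap.sub_apply, ContinuousMap.add_apply, ContinuousMap.const_apply,
      Real.norm_eq_abs, abs_le]
    constructor <;> linarith
  have hshift : μ φ + c - μ ψ ≤ c := by
    rw [← hadd]
    exact (le_abs_self _).trans ((hnonexp _ _).trans hdist)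
  linarith

theorem exists_abs_le_comp_add_of_eqOn_zero [T4Space Y] (f : C(X, Y)) {B : Set Y}
    (hB : IsClosed B) {α : C(X, ℝ)} (hα : Set.EqOn α 0 (f ⁻¹' B)) {ε : ℝ} (hε : 0 < ε) :
    ∃ θ : C(Y, ℝ), Set.EqOn θ 0 B ∧ ∀ x, |α x| ≤ θ (f x) + ε := by
  set K : Set X := {x | ε ≤ |α x|}
  have hK : IsClosed K := isClosed_le continuous_const (by fun_prop)
  have hdisj : Disjoint B (f '' K) := by
    rw [Set.disjoint_left]
    rintro _ hxB ⟨x, hxK : ε ≤ |α x|, rfl⟩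
    rw [hα hxB, Pi.zero_apply, abs_zero] at hxK
    exact hε.not_ge hxK
  obtain ⟨u, hu_zero, hu_one, hu_mem⟩ :=
    exists_continuous_zero_one_of_isClosed hB (f.continuous.isClosedMap K hK) hdisj
  refine ⟨‖α‖ • u, fun y hy ↦ by simp [hu_zero hy], fun x ↦ ?_⟩
  rw [ContinuousMap.smul_apply, smul_eq_mul]
  by_cases hx : x ∈ K
  · have hα_le : |α x| ≤ ‖α‖ := α.norm_coe_le_norm x
    rw [hu_one (Set.mem_image_of_mem f hx), Pi.one_apply, mul_one]
    linarith
  · have hα_lt : |α x| < ε := not_le.mp hx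
    have hu_nonneg : 0 ≤ ‖α‖ * u (f x) := mul_nonneg (norm_nonneg α) (hu_mem (f x)).1
    linarith

theorem eq_comp_of_eqOn_preimage [T4Space Y] (hmono : Monotone μ)
    (hadd : ∀ (φ : C(X, ℝ)) (c : ℝ), μ (φ + ContinuousMap.const X c) = μ φ + c)
    {f : C(X, Y)} {B : Set Y} (hB : IsClosed B)
    (hμB : ∀ ψ₁ ψ₂ : C(Y, ℝ), Set.EqOn ψ₁ ψ₂ B → μ (ψ₁.comp f) = μ (ψ₂.comp f))
    {φ : C(X, ℝ)} {ψ : C(Y, ℝ)} (hφψ : Set.EqOn φ (ψ.comp f) (f ⁻¹' B)) :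
    μ φ = μ (ψ.comp f) := by
  refine eq_of_forall_dist_le fun ε hε ↦ ?_
  obtain ⟨θ, hθB, hθ⟩ := exists_abs_le_comp_add_of_eqOn_zero f hB
    (α := φ - ψ.comp f) (fun x hx ↦ sub_eq_zero.mpr (hφψ hx)) hε
  simp only [ContinuousMap.sub_apply, ContinuousMap.comp_apply, abs_le] at hθ
  have hupper : μ φ ≤ μ (ψ.comp f) + ε := calc
    μ φ ≤ μ ((ψ + θ).comp f + ContinuousMap.const X ε) := by
      refine hmono (ContinuousMap.le_def.mpr fun x ↦ ?_)
      simp only [ContinuousMap.comp_apply, ContinuousMap.add_apply, ContinuousMap.const_apply]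
      linarith [(hθ x).2]
    _ = μ ((ψ + θ).comp f) + ε := hadd _ _
    _ = μ (ψ.comp f) + ε := by rw [hμB (ψ + θ) ψ fun y hy ↦ by simp [hθB hy]]
  have hlower : μ (ψ.comp f) ≤ μ φ + ε := calc
    μ (ψ.comp f) = μ ((ψ - θ).comp f) := hμB _ _ fun y hy ↦ by simp [hθB hy]
    _ ≤ μ (φ + ContinuousMap.const X ε) := by
      refine hmono (ContinuousMap.le_def.mpr fun x ↦ ?_)
      simp only [ContinuousMap.comp_apply, ContinuousMap.sub_apply, ContinuousMap.add_apply,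
        ContinuousMap.const_apply]
      linarith [(hθ x).1]
    _ = μ φ + ε := hadd _ _
  rw [Real.dist_eq, abs_sub_le_iff]
  constructor <;> linarith

theorem exists_eqOn_comp_of_injOn [T4Space Y] {Z : Type v} [TopologicalSpace Z]
    [TietzeExtension.{u, v} Z] {f : C(X, Y)} {A : Set X} (hA : IsClosed A) (hf : Set.InjOn f A)
    (φ : C(X, Z)) : ∃ ψ : C(Y, Z), Set.EqOn φ (ψ.comp f) A := by
  have hembed : IsClosedEmbedding (f.restrict A) :=
    .of_continuous_injective_isClosedMap (f.restrict A).continuous hf.injective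
      (f.continuous.isClosedMap.comp hA.isClosedEmbedding_subtypeVal.isClosedMap)
  obtain ⟨ψ, hψ⟩ := (φ.restrict A).exists_extension hembed
  exact ⟨ψ, fun x hx ↦ (DFunLike.congr_fun hψ ⟨x, hx⟩).symm⟩

theorem stmt11_general [T4Space Y] {f : C(X, Y)} {B : Set Y} (hB : IsClosed B)
    (hf : Set.InjOn f (f ⁻¹' B)) (hmono : Monotone μ)
    (hadd : ∀ (φ : C(X, ℝ)) (c : ℝ), μ (φ + ContinuousMap.const X c) = μ φ + c)
    (hμB : ∀ ψ₁ ψ₂ : C(Y, ℝ), Set.EqOn ψ₁ ψ₂ B → μ (ψ₁.comp f) = μ (ψ₂.comp f))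
    {φ₁ φ₂ : C(X, ℝ)} (hφ : Set.EqOn φ₁ φ₂ (f ⁻¹' B)) :
    μ φ₁ = μ φ₂ := by
  obtain ⟨ψ, hψ⟩ := exists_eqOn_comp_of_injOn (hB.preimage f.continuous) hf φ₁
  calc
    μ φ₁ = μ (ψ.comp f) := eq_comp_of_eqOn_preimage hmono hadd hB hμB hψ
    _ = μ φ₂ := (eq_comp_of_eqOn_preimage hmono hadd hB hμB (hφ.symm.trans hψ)).symm

end

/-- the functor `EA` preserves 1-preimages.  Let `f : X → Y` be a continuous
map of compact Hausdorff spaces and `B ⊆ Y` closed and nonempty with `f|_{f⁻¹(B)}` a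
homeomorphism onto `B`.  If `μ ∈ EA(X)` satisfies `μ(ψ₁ ∘ f) = μ(ψ₂ ∘ f)` for all
`ψ₁, ψ₂ ∈ C(Y)` agreeing on `B`, then `μ(φ₁) = μ(φ₂)` for all `φ₁, φ₂ ∈ C(X)` agreeing on
`f⁻¹(B)`. -/
theorem stmt11 (X Y : Type u) [TopologicalSpace X] [CompactSpace X] [T2Space X]
    [TopologicalSpace Y] [CompactSpace Y] [T2Space Y]
    (f : C(X, Y)) (B : Set Y) (hB : IsClosed B) (hne : B.Nonempty)
    (hhomeo : IsHomeomorph (B.restrictPreimage (f : X → Y)))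
    (μ : C(X, ℝ) → ℝ) (hμ : μ ∈ EASet X)
    (h : ∀ ψ₁ ψ₂ : C(Y, ℝ), Set.EqOn (ψ₁ : Y → ℝ) (ψ₂ : Y → ℝ) B →
      μ (ψ₁.comp f) = μ (ψ₂.comp f)) :
    ∀ φ₁ φ₂ : C(X, ℝ), Set.EqOn (φ₁ : X → ℝ) (φ₂ : X → ℝ) ((f : X → Y) ⁻¹' B) →
      μ φ₁ = μ φ₂ := by
  obtain ⟨-, hnonexp, hadd⟩ := hμ
  have hinj : Set.InjOn f (f ⁻¹' B) :=
    (Set.MapsTo.restrict_inj (Set.mapsTo_preimage f B)).mp hhomeo.injective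
  exact fun _ _ ↦ stmt11_general hB hinj
    (monotone_of_nonexpanding_of_weaklyAdditive hnonexp hadd) hadd h
end

section
/- Let X = {x, y, s, t} and Y = {a, b, c} be finite discrete spaces and f : X → Y the map with f(x) = a, f(y) = b, f(s) = f(t) = c. There exists a functional ν̃ : C(X) → ℝ that is non-expanding and satisfies min φ(X) ≤ ν̃(φ) ≤ max φ(X) for all φ (i.e. ν̃ ∈ E(X)), such that: (1) ν̃(ψ₁ ∘ f) = ν̃(ψ₂ ∘ f) for all ψ₁, ψ₂ : Y → ℝ with ψ₁(a) = ψ₂(a) and ψ₁(b) = ψ₂(b); and (2) there exist φ₁, φ₂ : X → ℝ with φ₁(x) = φ₂(x) and φ₁(y) = φ₂(y) but ν̃(φ₁) ≠ ν̃(φ₂). Consequently, the functor E of non-expanding functionals does not preserve 1-preimages. -/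
open Topology

/-- The map `f : X → Y` between the discrete spaces `X = {x, y, s, t}` (encoded as `Fin 4`,
with `x = 0`, `y = 1`, `s = 2`, `t = 3`) and `Y = {a, b, c}` (encoded as `Fin 3`, with
`a = 0`, `b = 1`, `c = 2`), given by `f(x) = a`, `f(y) = b`, `f(s) = f(t) = c`. -/
def fmap : Fin 4 → Fin 3 := ![0, 1, 2, 2]

/-!
If `f` identifies `s` and `t`, the functional `φ ↦ |φ s - φ t| / 2` vanishes on every `ψ ∘ f`
although it is not constant. Taking its median with `φ x` and `φ y` brings it between the minimum
and the maximum of `φ`. On functions `ψ ∘ f` the result depends only on `ψ (f x)` and `ψ (f y)`, but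
in general it still depends on `φ s`.
The factor `1 / 2` makes the oscillation non-expanding.
-/

/-- The median of three elements, written as the truncation of `c` to the interval between `a` and
`b`; it is used to force a functional between the minimum and the maximum of its argument. -/
def median {α : Type*} [LinearOrder α] (a b c : α) : α :=
  max (min a b) (min (max a b) c)

section Median

variable {α : Type*} [LinearOrder α] {a b c : α}

theorem le_median {d : α} (ha : d ≤ a) (hb : d ≤ b) : d ≤ median a b c :=
  le_max_of_le_left (le_min ha hb)

theorem median_le {d : α} (ha : a ≤ d) (hb : b ≤ d) : median a b c ≤ d :=
  max_le (min_le_of_left_le ha) (min_le_of_left_le (max_le ha hb))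

theorem median_eq_right (hac : a ≤ c) (hcb : c ≤ b) : median a b c = c := by
  rw [median, min_eq_left (hac.trans hcb), max_eq_right (hac.trans hcb), min_eq_right hcb,
    max_eq_right hac]

end Median

section Lipschitz

variable {E : Type*} [PseudoEMetricSpace E] {K : NNReal} {f g h : E → ℝ}

theorem lipschitzWith_median (hf : LipschitzWith K f) (hg : LipschitzWith K g)
    (hh : LipschitzWith K h) : LipschitzWith K fun e => median (f e) (g e) (h e) := by
  simpa only [max_self, median] using (hf.min hg).max ((hf.max hg).min hh)

theorem lipschitzWith_abs_sub_div_two (hf : LipschitzWith K f) (hg : LipschitzWith K g) :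
    LipschitzWith K fun e => |f e - g e| / 2 := by
  have habs : LipschitzWith (K + K) fun e => |f e - g e| := by
    simpa only [one_mul, Function.comp_def, Real.norm_eq_abs] using
      lipschitzWith_one_norm.comp (hf.sub hg)
  have hscale : LipschitzWith ‖(2⁻¹ : ℝ)‖₊ fun r : ℝ => 2⁻¹ * r := lipschitzWith_smul 2⁻¹
  have hK : ‖(2⁻¹ : ℝ)‖₊ * (K + K) = K := by
    ext
    push_cast
    norm_num
    ring
  simpa only [hK, Function.comp_def, div_eq_inv_mul] using hscale.comp habs

end Lipschitz

/-- Membership in `E(X)`: the functional is non-expanding for the sup-norm and takes values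
between the minimum and the maximum of its argument. -/
structure IsNonexpandingFunctional {X : Type*} [TopologicalSpace X] [CompactSpace X]
    (ν : C(X, ℝ) → ℝ) : Prop where
  lipschitzWith : LipschitzWith 1 ν
  iInf_le : ∀ φ : C(X, ℝ), ⨅ p, φ p ≤ ν φ
  le_iSup : ∀ φ : C(X, ℝ), ν φ ≤ ⨆ p, φ p

/-- The functional `ν` depends only on the restriction of its argument to `A`. For `ν ∈ E(X)` and
closed `A` this says that `ν` lies in `E(A)`, viewed as a subset of `E(X)`. -/
def IsSupportedOn {X : Type*} [TopologicalSpace X] (ν : C(X, ℝ) → ℝ) (A : Set X) : Prop :=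
  ∀ ⦃φ ψ : C(X, ℝ)⦄, Set.EqOn φ ψ A → ν φ = ν ψ

/-- The action `E(f)` of the functor on a continuous map `f`. -/
def functionalMap {X Y : Type*} [TopologicalSpace X] [TopologicalSpace Y] (f : C(X, Y))
    (ν : C(X, ℝ) → ℝ) : C(Y, ℝ) → ℝ :=
  fun ψ => ν (ψ.comp f)

/-- The functional `φ ↦ median (φ x, φ y, |φ s - φ t| / 2)`, the witness that `E` does not preserve
preimages. -/
noncomputable def medianFunctional {X : Type*} [TopologicalSpace X] (x y s t : X)
    (φ : C(X, ℝ)) : ℝ :=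
  median (φ x) (φ y) (|φ s - φ t| / 2)

theorem IsNonexpandingFunctional.abs_sub_le_iSup {X : Type*} [TopologicalSpace X] [CompactSpace X]
    {ν : C(X, ℝ) → ℝ} (hν : IsNonexpandingFunctional ν) (φ ψ : C(X, ℝ)) :
    |ν φ - ν ψ| ≤ ⨆ p, |φ p - ψ p| := by
  have h : |ν φ - ν ψ| ≤ ‖φ - ψ‖ := by
    simpa [Real.dist_eq, dist_eq_norm] using hν.lipschitzWith.dist_le_mul φ ψ
  exact h.trans_eq (ContinuousMap.norm_eq_iSup_norm _)

section MedianFunctional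

variable {X Y : Type*} [TopologicalSpace X] [TopologicalSpace Y]

theorem isNonexpandingFunctional_medianFunctional [CompactSpace X] (x y s t : X) :
    IsNonexpandingFunctional (medianFunctional x y s t) where
  lipschitzWith :=
    have heval (p : X) : LipschitzWith 1 fun φ : C(X, ℝ) => φ p :=
      LipschitzWith.mk_one fun _ _ => ContinuousMap.dist_apply_le_dist p
    lipschitzWith_median (heval x) (heval y) (lipschitzWith_abs_sub_div_two (heval s) (heval t))
  iInf_le φ :=
    have hbdd := (isCompact_range φ.continuous).bddBelow
    le_median (ciInf_le hbdd x) (ciInf_le hbdd y)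
  le_iSup φ :=
    have hbdd := (isCompact_range φ.continuous).bddAbove
    median_le (le_ciSup hbdd x) (le_ciSup hbdd y)

theorem isSupportedOn_functionalMap_medianFunctional (f : C(X, Y)) {x y s t : X}
    (hst : f s = f t) {A : Set Y} (hx : f x ∈ A) (hy : f y ∈ A) :
    IsSupportedOn (functionalMap f (medianFunctional x y s t)) A := by
  intro ψ₁ ψ₂ hψ
  simp only [functionalMap, medianFunctional, ContinuousMap.comp_apply, hψ hx, hψ hy, hst,
    sub_self]

/-- Adding multiples of a Urysohn function that separates `s` from `B ∪ {t}` changes `φ s - φ t`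
arbitrarily without changing `φ` on `B`. -/
theorem not_isSupportedOn_medianFunctional [NormalSpace X] [T1Space X] {x y s t : X} {B : Set X}
    (hB : IsClosed B) (hx : x ∈ B) (hy : y ∈ B) (hs : s ∉ B) (hxy : x ≠ y) (hst : s ≠ t) :
    ¬ IsSupportedOn (medianFunctional x y s t) B := by
  obtain ⟨g, hg0, hg1, -⟩ := exists_continuous_zero_one_of_isClosed
    isClosed_singleton isClosed_singleton (Set.disjoint_singleton.2 hxy)
  obtain ⟨k, hk0, hk1, -⟩ := exists_continuous_zero_one_of_isClosed
    (hB.union (isClosed_singleton (x := t))) (isClosed_singleton (x := s))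
    (Set.disjoint_singleton_right.2 (by simp [hs, hst]))
  have hgx : g x = 0 := hg0 rfl
  have hgy : g y = 1 := hg1 rfl
  have hks : k s = 1 := hk1 rfl
  have hkt : k t = 0 := hk0 (Or.inr rfl)
  have hkB {p : X} (hp : p ∈ B) : k p = 0 := hk0 (Or.inl hp)
  let φ (c : ℝ) : C(X, ℝ) := g + (2 * c - (g s - g t)) • k
  have hφB (c : ℝ) {p : X} (hp : p ∈ B) : φ c p = g p := by simp [φ, hkB hp]
  have hφst (c : ℝ) : φ c s - φ c t = 2 * c := by simp [φ, hks, hkt]; ring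
  have hmed {c : ℝ} (h0 : 0 ≤ c) (h1 : c ≤ 1) : medianFunctional x y s t (φ c) = c := by
    have hosc : |φ c s - φ c t| / 2 = c := by
      rw [hφst, abs_of_nonneg (by positivity), mul_div_cancel_left₀ c two_ne_zero]
    rw [medianFunctional, hosc, hφB c hx, hφB c hy, hgx, hgy, median_eq_right h0 h1]
  intro hsupp
  have heq : Set.EqOn (φ 0) (φ 1) B := fun p hp => (hφB 0 hp).trans (hφB 1 hp).symm
  exact zero_ne_one <| (hmed le_rfl zero_le_one).symm.trans <|
    (hsupp heq).trans (hmed zero_le_one le_rfl)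

end MedianFunctional

theorem stmt12_general {X Y : Type*} [TopologicalSpace X] [CompactSpace X] [T2Space X]
    [TopologicalSpace Y] (f : C(X, Y)) {A : Set Y} (hA : IsClosed A) {x y s t : X}
    (hx : f x ∈ A) (hy : f y ∈ A) (hs : f s ∉ A) (hxy : x ≠ y) (hst : s ≠ t)
    (hfst : f s = f t) :
    ∃ ν : C(X, ℝ) → ℝ, IsNonexpandingFunctional ν ∧ IsSupportedOn (functionalMap f ν) A ∧
      ¬ IsSupportedOn ν (f ⁻¹' A) :=
  ⟨medianFunctional x y s t, isNonexpandingFunctional_medianFunctional x y s t,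
    isSupportedOn_functionalMap_medianFunctional f hfst hx hy,
    not_isSupportedOn_medianFunctional (hA.preimage f.continuous) hx hy hs hxy hst⟩

/-- there is a functional `ν̃ ∈ E(X)` on the four-point discrete space `X`
(non-expanding, with `min φ(X) ≤ ν̃(φ) ≤ max φ(X)`; functions `X → ℝ` are exactly the
elements of `C(X)` and the sup-norm is `max_{p ∈ X} |φ(p)|`) such that `E(f)(ν̃) ∈ E({a,b})`
but `ν̃ ∉ E({x,y}) = E(f⁻¹({a,b}))`.  Consequently the functor `E` of non-expanding
functionals does not preserve 1-preimages. -/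
theorem stmt12 :
    ∃ ν : (Fin 4 → ℝ) → ℝ,
      (∀ φ ψ : Fin 4 → ℝ, |ν φ - ν ψ| ≤ ⨆ p, |φ p - ψ p|) ∧
      (∀ φ : Fin 4 → ℝ, (⨅ p, φ p) ≤ ν φ ∧ ν φ ≤ ⨆ p, φ p) ∧
      (∀ ψ₁ ψ₂ : Fin 3 → ℝ, ψ₁ 0 = ψ₂ 0 → ψ₁ 1 = ψ₂ 1 →
        ν (ψ₁ ∘ fmap) = ν (ψ₂ ∘ fmap)) ∧
      (∃ φ₁ φ₂ : Fin 4 → ℝ, φ₁ 0 = φ₂ 0 ∧ φ₁ 1 = φ₂ 1 ∧ ν φ₁ ≠ ν φ₂) := by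
  obtain ⟨ν, hν, hsupp, hnot⟩ := stmt12_general (x := 0) (y := 1) (s := 2) (t := 3)
    ⟨fmap, continuous_of_discreteTopology⟩ (isClosed_discrete {0, 1}) (by simp [fmap])
    (by simp [fmap]) (by simp [fmap]) (by decide) (by decide) rfl
  simp only [IsSupportedOn, not_forall] at hnot
  obtain ⟨φ₁, φ₂, hφ, hne⟩ := hnot
  let toC {n : ℕ} (φ : Fin n → ℝ) : C(Fin n, ℝ) := ⟨φ, continuous_of_discreteTopology⟩
  exact ⟨fun φ => ν (toC φ), fun φ ψ => hν.abs_sub_le_iSup (toC φ) (toC ψ),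
    fun φ => ⟨hν.iInf_le (toC φ), hν.le_iSup (toC φ)⟩,
    fun ψ₁ ψ₂ h0 h1 => hsupp (φ := toC ψ₁) (ψ := toC ψ₂) (by simp [Set.EqOn, toC, h0, h1]),
    φ₁, φ₂, hφ (by simp [fmap]), hφ (by simp [fmap]), hne⟩
end

section
/- Let X be a compact Hausdorff space and A ⊆ X a closed nonempty subset. Suppose ν ∈ EA(X) can be written as an affine combination ν = Σ_{i=1}^n t_i ν_i with t_i ∈ ℝ, Σ_{i=1}^n t_i = 1, where each ν_i ∈ EA(X) satisfies ν_i(φ₁) = ν_i(φ₂) for all φ₁, φ₂ ∈ C(X) with φ₁|_A = φ₂|_A. Then there exists ν₀ ∈ EA(A) with ν(φ) = ν₀(φ|_A) for every φ ∈ C(X). -/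
open Topology

universe u

/-!
Since `ν` takes equal values on functions that agree on `A`, it descends along the restriction map
`C(X) → C(A)` to some `ν₀`. By Tietze, every function on `A` extends to `X` without increasing its
norm, so extending a difference `f - g` shows that `ν₀` is again non-expanding; weak additivity
passes down through any extension, and `ν₀(0) = ν(0) = 0`. The bounds `min f ≤ ν₀(f) ≤ max f`
then come for free: subtract from `f` the midpoint of its range and compare with `0`.
-/

section Bounds

variable {X : Type*} [TopologicalSpace X] [CompactSpace X]

theorem norm_sub_const_midpoint_le {f : C(X, ℝ)} {m M : ℝ} (hmM : m ≤ M)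
    (hf : ∀ x, f x ∈ Set.Icc m M) :
    ‖f - ContinuousMap.const X ((m + M) / 2)‖ ≤ (M - m) / 2 := by
  refine (ContinuousMap.norm_le _ (by linarith)).mpr fun x => ?_
  obtain ⟨hm, hM⟩ := hf x
  rw [ContinuousMap.sub_apply, ContinuousMap.const_apply, Real.norm_eq_abs, abs_le]
  constructor <;> linarith

theorem apply_mem_Icc_of_nonexpanding_of_weaklyAdditive {ν : C(X, ℝ) → ℝ} (h_zero : ν 0 = 0)
    (h_nonexp : ∀ φ ψ : C(X, ℝ), |ν φ - ν ψ| ≤ ‖φ - ψ‖)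
    (h_add : ∀ (φ : C(X, ℝ)) (c : ℝ), ν (φ + ContinuousMap.const X c) = ν φ + c)
    {f : C(X, ℝ)} {m M : ℝ} (hmM : m ≤ M) (hf : ∀ x, f x ∈ Set.Icc m M) :
    ν f ∈ Set.Icc m M := by
  set c := (m + M) / 2 with hc
  set g := f - ContinuousMap.const X c with hg
  have h_shift : ν f = ν g + c := by rw [← h_add, hg, sub_add_cancel]
  have h_abs : |ν g| ≤ (M - m) / 2 :=
    calc |ν g| = |ν g - ν 0| := by rw [h_zero, sub_zero]
      _ ≤ ‖g - 0‖ := h_nonexp g 0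
      _ = ‖g‖ := by rw [sub_zero]
      _ ≤ (M - m) / 2 := norm_sub_const_midpoint_le hmM hf
  obtain ⟨h_lower, h_upper⟩ := abs_le.mp h_abs
  constructor <;> linarith

theorem apply_zero_of_mem_eaSet {ν : C(X, ℝ) → ℝ} (hν : ν ∈ EASet X) : ν 0 = 0 := by
  have h_nonneg : 0 ≤ sInf (Set.range (0 : C(X, ℝ))) :=
    Real.sInf_nonneg (Set.forall_mem_range.mpr fun _ => le_rfl)
  have h_nonpos : sSup (Set.range (0 : C(X, ℝ))) ≤ 0 :=
    Real.sSup_nonpos (Set.forall_mem_range.mpr fun _ => le_rfl)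
  exact le_antisymm ((hν.1 0).2.trans h_nonpos) (h_nonneg.trans (hν.1 0).1)

theorem mem_eaSet_iff {ν : C(X, ℝ) → ℝ} :
    ν ∈ EASet X ↔ ν 0 = 0 ∧ (∀ φ ψ : C(X, ℝ), |ν φ - ν ψ| ≤ ‖φ - ψ‖) ∧
      ∀ (φ : C(X, ℝ)) (c : ℝ), ν (φ + ContinuousMap.const X c) = ν φ + c := by
  refine ⟨fun hν => ⟨apply_zero_of_mem_eaSet hν, hν.2⟩, fun ⟨h_zero, h_nonexp, h_add⟩ =>
    ⟨fun f => ?_, h_nonexp, h_add⟩⟩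
  have h_range : IsCompact (Set.range f) := isCompact_range f.continuous
  exact apply_mem_Icc_of_nonexpanding_of_weaklyAdditive h_zero h_nonexp h_add
    (Real.sInf_le_sSup _ h_range.bddBelow h_range.bddAbove)
    fun x => ⟨csInf_le h_range.bddBelow ⟨x, rfl⟩, le_csSup h_range.bddAbove ⟨x, rfl⟩⟩

end Bounds

section ClosedEmbedding

variable {X Y : Type*} [TopologicalSpace X] [CompactSpace X] [NormalSpace X]
  [TopologicalSpace Y] [CompactSpace Y] {e : C(Y, X)}

theorem exists_norm_eq_comp_eq_of_isClosedEmbedding (he : IsClosedEmbedding e) (f : C(Y, ℝ)) :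
    ∃ F : C(X, ℝ), ‖F‖ = ‖f‖ ∧ F.comp e = f := by
  obtain ⟨F, hF_norm, hF⟩ :=
    BoundedContinuousFunction.exists_extension_norm_eq_of_isClosedEmbedding
      (BoundedContinuousFunction.mkOfCompact f) he
  refine ⟨F.toContinuousMap, ?_, DFunLike.coe_injective hF⟩
  rw [BoundedContinuousFunction.norm_toContinuousMap_eq, hF_norm,
    BoundedContinuousFunction.norm_mkOfCompact]

theorem mem_eaSet_of_comp_mem_eaSet (he : IsClosedEmbedding e) {ν₀ : C(Y, ℝ) → ℝ}
    (hν₀ : (fun φ : C(X, ℝ) => ν₀ (φ.comp e)) ∈ EASet X) : ν₀ ∈ EASet Y := by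
  obtain ⟨h_zero, h_nonexp, h_add⟩ := mem_eaSet_iff.mp hν₀
  refine mem_eaSet_iff.mpr ⟨h_zero, fun f g => ?_, fun f c => ?_⟩
  · obtain ⟨G, -, rfl⟩ := exists_norm_eq_comp_eq_of_isClosedEmbedding he g
    obtain ⟨D, hD_norm, hD⟩ := exists_norm_eq_comp_eq_of_isClosedEmbedding he (f - G.comp e)
    have h_comp : (D + G).comp e = f := by rw [ContinuousMap.add_comp, hD, sub_add_cancel]
    calc |ν₀ f - ν₀ (G.comp e)| = |ν₀ ((D + G).comp e) - ν₀ (G.comp e)| := by rw [h_comp]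
      _ ≤ ‖D + G - G‖ := h_nonexp (D + G) G
      _ = ‖f - G.comp e‖ := by rw [add_sub_cancel_right, hD_norm]
  · obtain ⟨F, -, rfl⟩ := exists_norm_eq_comp_eq_of_isClosedEmbedding he f
    exact h_add F c

theorem stmt14_general (he : IsClosedEmbedding e) {ν : C(X, ℝ) → ℝ} (hν : ν ∈ EASet X)
    (h_factors : ν.FactorsThrough fun φ : C(X, ℝ) => φ.comp e) :
    ∃ ν₀ ∈ EASet Y, ∀ φ : C(X, ℝ), ν φ = ν₀ (φ.comp e) := by
  obtain ⟨ν₀, rfl⟩ := (Function.factorsThrough_iff ν).mp h_factors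
  exact ⟨ν₀, mem_eaSet_of_comp_mem_eaSet he hν, fun _ => rfl⟩

end ClosedEmbedding

/-- let `X` be a compact Hausdorff space and `A ⊆ X` closed and nonempty.  If
`ν ∈ EA(X)` is an affine combination `ν = ∑ tᵢ νᵢ` (pointwise, with `∑ tᵢ = 1`) of
functionals `νᵢ ∈ EA(X)` each of which satisfies `νᵢ(φ₁) = νᵢ(φ₂)` whenever `φ₁, φ₂ ∈ C(X)`
agree on `A`, then there exists `ν₀ ∈ EA(A)` with `ν(φ) = ν₀(φ|_A)` for every `φ ∈ C(X)`. -/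
theorem stmt14 (X : Type u) [TopologicalSpace X] [CompactSpace X] [T2Space X]
    (A : Set X) (hA : IsClosed A) (hne : A.Nonempty)
    (ν : C(X, ℝ) → ℝ) (hν : ν ∈ EASet X)
    (n : ℕ) (t : Fin n → ℝ) (νs : Fin n → (C(X, ℝ) → ℝ))
    (ht : ∑ i, t i = 1)
    (hmem : ∀ i, νs i ∈ EASet X)
    (hconst : ∀ (i : Fin n) (φ₁ φ₂ : C(X, ℝ)),
      Set.EqOn (φ₁ : X → ℝ) (φ₂ : X → ℝ) A → νs i φ₁ = νs i φ₂)
    (hsum : ∀ φ : C(X, ℝ), ν φ = ∑ i, t i * νs i φ) :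
    haveI : CompactSpace A := isCompact_iff_compactSpace.mp hA.isCompact
    ∃ ν₀ ∈ EASet (↥A), ∀ φ : C(X, ℝ), ν φ = ν₀ (φ.restrict A) := by
  have : CompactSpace A := isCompact_iff_compactSpace.mp hA.isCompact
  refine stmt14_general (e := ⟨Subtype.val, continuous_subtype_val⟩)
    hA.isClosedEmbedding_subtypeVal hν fun φ₁ φ₂ h => ?_
  simp only [hsum, hconst _ φ₁ φ₂ fun x hx => DFunLike.congr_fun h (⟨x, hx⟩ : A)]
end

section
/- Let X = {x, y, s, t} be a four-point discrete space, A = {φ : X → ℝ : φ(s) = φ(t)}, and let ν : A → ℝ be defined by: ν(φ) = min{φ(x), φ(y)} if φ(x) ≥ 0 and φ(y) ≥ 0; ν(φ) = max{φ(x), φ(y)} if φ(x) ≤ 0 and φ(y) ≤ 0; and ν(φ) = 0 otherwise. Let ψ : X → ℝ be given by ψ(x) = 1, ψ(y) = −1, ψ(s) = 0, ψ(t) = 4. Then the extension of ν to A ∪ {ψ} assigning the value −1 to ψ is non-expanding: |−1 − ν(φ)| ≤ max_{p ∈ X} |ψ(p) − φ(p)| for every φ ∈ A; moreover min_{p ∈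 X} ψ(p) ≤ −1 ≤ max_{p ∈ X} ψ(p). -/
open Topology

/-- The functional `ν` on `A = {φ : X → ℝ : φ(s) = φ(t)}`, where `X = {x, y, s, t}` is the
four-point discrete space (encoded as `Fin 4` with `x = 0`, `y = 1`, `s = 2`, `t = 3`):
`ν(φ) = min {φ(x), φ(y)}` if `φ(x), φ(y) ≥ 0`; `ν(φ) = max {φ(x), φ(y)}` if
`φ(x), φ(y) ≤ 0`; and `ν(φ) = 0` otherwise. -/
noncomputable def nu0 (φ : Fin 4 → ℝ) : ℝ :=
  if 0 ≤ φ 0 ∧ 0 ≤ φ 1 then min (φ 0) (φ 1)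
  else if φ 0 ≤ 0 ∧ φ 1 ≤ 0 then max (φ 0) (φ 1)
  else 0

/-- The function `ψ : X → ℝ` with `ψ(x) = 1`, `ψ(y) = -1`, `ψ(s) = 0`, `ψ(t) = 4`. -/
noncomputable def psi16 : Fin 4 → ℝ := ![1, -1, 0, 4]

/-!
The value `ν(φ)` is the median of `φ(x)`, `φ(y)` and `0`, so it lies above
`min (max (φ x) (φ y)) 0` and below `max (min (φ x) (φ y)) 0`. Let `c` be a value between `ψ(x)`
and `ψ(y)`. Since `max` and `min` are non-expanding, these bounds put `ν(φ)` within `M` of `c` as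
soon as `|ψ - φ| ≤ M` at `x` and `y` and `|c| ≤ M`. The points `s` and `t` supply the last
condition: one number `φ(s) = φ(t)` cannot approximate both `ψ(s)` and `ψ(t)` better than
`|ψ(s) - ψ(t)| / 2`.
-/

theorem abs_sub_le_two_mul_iSup_abs_sub {ι : Type*} [Finite ι] (f : ι → ℝ) {g : ι → ℝ} {i j : ι}
    (hg : g i = g j) : |f i - f j| ≤ 2 * ⨆ p, |f p - g p| := by
  have hi := Finite.le_ciSup (fun p ↦ |f p - g p|) i
  have hj := Finite.le_ciSup (fun p ↦ |f p - g p|) j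
  calc |f i - f j| ≤ |f i - g i| + |g i - f j| := abs_sub_le _ _ _
    _ = |f i - g i| + |f j - g j| := by rw [hg, abs_sub_comm (g j)]
    _ ≤ 2 * ⨆ p, |f p - g p| := by linarith

theorem nu0_eq_max_min (φ : Fin 4 → ℝ) :
    nu0 φ = max (min (φ 0) (φ 1)) (min (max (φ 0) (φ 1)) 0) := by
  unfold nu0
  split_ifs with hnonneg hnonpos
  · rw [min_eq_right (le_max_of_le_left hnonneg.1), max_eq_left (le_min hnonneg.1 hnonneg.2)]
  · rw [min_eq_left (max_le hnonpos.1 hnonpos.2), max_eq_right min_le_max]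
  · have hmin : min (φ 0) (φ 1) ≤ 0 := by
      by_contra! h
      exact hnonneg (le_min_iff.mp h.le)
    have hmax : 0 ≤ max (φ 0) (φ 1) := by
      by_contra! h
      exact hnonpos (max_le_iff.mp h.le)
    rw [min_eq_right hmax, max_eq_right hmin]

theorem nu0_le_max_min_zero (φ : Fin 4 → ℝ) : nu0 φ ≤ max (min (φ 0) (φ 1)) 0 :=
  (nu0_eq_max_min φ).trans_le (max_le_max_left _ (min_le_right _ _))

theorem min_max_zero_le_nu0 (φ : Fin 4 → ℝ) : min (max (φ 0) (φ 1)) 0 ≤ nu0 φ :=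
  (le_max_right _ _).trans_eq (nu0_eq_max_min φ).symm

theorem abs_sub_nu0_le {φ ψ : Fin 4 → ℝ} {c M : ℝ} (hc : c ∈ Set.uIcc (ψ 0) (ψ 1))
    (h0 : |ψ 0 - φ 0| ≤ M) (h1 : |ψ 1 - φ 1| ≤ M) (hcM : |c| ≤ M) : |c - nu0 φ| ≤ M := by
  have hmax : |max (ψ 0) (ψ 1) - max (φ 0) (φ 1)| ≤ M :=
    (abs_max_sub_max_le_max _ _ _ _).trans (max_le h0 h1)
  have hmin : |min (ψ 0) (ψ 1) - min (φ 0) (φ 1)| ≤ M :=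
    (abs_min_sub_min_le_max _ _ _ _).trans (max_le h0 h1)
  have hlower : c - M ≤ min (max (φ 0) (φ 1)) 0 :=
    le_min (by linarith [hc.2, le_of_abs_le hmax]) (by linarith [le_of_abs_le hcM])
  have hupper : max (min (φ 0) (φ 1)) 0 ≤ c + M :=
    max_le (by linarith [hc.1, neg_le_of_abs_le hmin]) (by linarith [neg_le_of_abs_le hcM])
  rw [abs_sub_le_iff]
  constructor
  · linarith [min_max_zero_le_nu0 φ]
  · linarith [nu0_le_max_min_zero φ]

theorem stmt16_general {ψ : Fin 4 → ℝ} {c : ℝ} (hc : c ∈ Set.uIcc (ψ 0) (ψ 1))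
    (hst : 2 * |c| ≤ |ψ 2 - ψ 3|) :
    (∀ φ : Fin 4 → ℝ, φ 2 = φ 3 → |c - nu0 φ| ≤ ⨆ p, |ψ p - φ p|) ∧
    ((⨅ p, ψ p) ≤ c ∧ c ≤ ⨆ p, ψ p) := by
  refine ⟨fun φ hφ ↦ ?_, ?_, ?_⟩
  · have hle := Finite.le_ciSup (fun p ↦ |ψ p - φ p|)
    have hcM : |c| ≤ ⨆ p, |ψ p - φ p| := by
      linarith [abs_sub_le_two_mul_iSup_abs_sub ψ hφ]
    exact abs_sub_nu0_le hc (hle 0) (hle 1) hcM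
  · exact (le_min (Finite.ciInf_le ψ 0) (Finite.ciInf_le ψ 1)).trans hc.1
  · exact hc.2.trans (max_le (Finite.le_ciSup ψ 0) (Finite.le_ciSup ψ 1))

/-- extending `ν` to `A ∪ {ψ}` by assigning the value `-1` to `ψ` yields a
non-expanding functional, and `min_{p ∈ X} ψ(p) ≤ -1 ≤ max_{p ∈ X} ψ(p)`. -/
theorem stmt16 :
    (∀ φ : Fin 4 → ℝ, φ 2 = φ 3 → |(-1 : ℝ) - nu0 φ| ≤ ⨆ p, |psi16 p - φ p|) ∧
    ((⨅ p, psi16 p) ≤ -1 ∧ (-1 : ℝ) ≤ ⨆ p, psi16 p) :=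
  stmt16_general (by simp [psi16]) (show 2 * |(-1 : ℝ)| ≤ |0 - 4| by norm_num)
end

section
/- Let f : X → Y be a continuous open surjection of compact Hausdorff spaces and let φ : X → ℝ be continuous. Then the function ψ' : Y → ℝ defined by ψ'(y) = max φ(f⁻¹(y)) (the maximum exists since f⁻¹(y) is a nonempty compact set) is continuous. -/
open Topology

universe u

/-!
The function `ψ'` is a marginal function of the fiber correspondence `y ↦ f⁻¹(y)`, so its
continuity is an instance of Berge's maximum theorem: openness of `f` makes the correspondence lower
hemicontinuous, properness makes it upper hemicontinuous with compact values, and these two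
properties yield lower and upper semicontinuity of the maximum, respectively.
-/

section Berge

variable {X Y α : Type*} [TopologicalSpace X] [TopologicalSpace Y]
  [ConditionallyCompleteLinearOrder α] {Γ : Y → Set X} {φ : X → α}

theorem sSup_image_lt_iff_of_upperSemicontinuousOn {K : Set X} (hK : IsCompact K)
    (hne : K.Nonempty) (hφ : UpperSemicontinuousOn φ K) (a : α) :
    sSup (φ '' K) < a ↔ ∀ x ∈ K, φ x < a := by
  obtain ⟨x, hx, hmax⟩ := hφ.exists_isMaxOn hne hK
  have hgreatest : IsGreatest (φ '' K) (φ x) :=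
    ⟨Set.mem_image_of_mem φ hx, Set.forall_mem_image.2 hmax⟩
  rw [hgreatest.csSup_eq, hgreatest.lt_iff, Set.forall_mem_image]

theorem lowerSemicontinuous_sSup_image (hΓ : LowerHemicontinuous Γ)
    (hne : ∀ y, (Γ y).Nonempty) (hbdd : ∀ y, BddAbove (φ '' Γ y)) (hφ : LowerSemicontinuous φ) :
    LowerSemicontinuous fun y => sSup (φ '' Γ y) := by
  have lt_iff (y : Y) (a : α) : a < sSup (φ '' Γ y) ↔ (Γ y ∩ φ ⁻¹' Set.Ioi a).Nonempty := by
    rw [lt_csSup_iff (hbdd y) ((hne y).image φ), Set.exists_mem_image]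
    rfl
  intro y a ha
  simp only [lt_iff] at ha ⊢
  exact lowerHemicontinuousAt_iff.1 (hΓ.lowerHemicontinuousAt y) _ (hφ.isOpen_preimage a) ha

theorem upperSemicontinuous_sSup_image (hΓ : UpperHemicontinuous Γ)
    (hne : ∀ y, (Γ y).Nonempty) (hcompact : ∀ y, IsCompact (Γ y)) (hφ : UpperSemicontinuous φ) :
    UpperSemicontinuous fun y => sSup (φ '' Γ y) := by
  have lt_iff (y : Y) (a : α) : sSup (φ '' Γ y) < a ↔ Γ y ⊆ φ ⁻¹' Set.Iio a :=
    sSup_image_lt_iff_of_upperSemicontinuousOn (hcompact y) (hne y)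
      (hφ.upperSemicontinuousOn _) a
  intro y a ha
  simp only [lt_iff] at ha ⊢
  exact (hΓ.upperHemicontinuousAt y).forall_isOpen _ (hφ.isOpen_preimage a) ha

theorem continuous_sSup_image_of_hemicontinuous [TopologicalSpace α] [OrderTopology α]
    (hlower : LowerHemicontinuous Γ) (hupper : UpperHemicontinuous Γ)
    (hne : ∀ y, (Γ y).Nonempty) (hcompact : ∀ y, IsCompact (Γ y)) (hφ : Continuous φ) :
    Continuous fun y => sSup (φ '' Γ y) := by
  have hbdd (y : Y) : BddAbove (φ '' Γ y) :=
    have : Nonempty α := ⟨φ (hne y).some⟩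
    (hcompact y).bddAbove_image hφ.continuousOn
  exact continuous_iff_lower_upperSemicontinuous.2
    ⟨lowerSemicontinuous_sSup_image hlower hne hbdd hφ.lowerSemicontinuous,
      upperSemicontinuous_sSup_image hupper hne hcompact hφ.upperSemicontinuous⟩

end Berge

theorem stmt17_general {X Y α : Type*} [TopologicalSpace X] [TopologicalSpace Y]
    [ConditionallyCompleteLinearOrder α] [TopologicalSpace α] [OrderTopology α]
    {f : X → Y} (hf : IsProperMap f) (hopen : IsOpenMap f) (hsurj : Function.Surjective f)
    {φ : X → α} (hφ : Continuous φ) :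
    Continuous fun y : Y => sSup (φ '' (f ⁻¹' {y})) :=
  continuous_sSup_image_of_hemicontinuous (isOpenMap_iff_lowerHemicontinuous.1 hopen)
    (isClosedMap_iff_upperHemicontinuous.1 hf.isClosedMap) hsurj
    (fun _ => hf.isCompact_preimage isCompact_singleton) hφ

/-- if `f : X → Y` is a continuous open surjection of compact Hausdorff spaces
and `φ : X → ℝ` is continuous, then `ψ'(y) = max φ(f⁻¹(y))` is continuous (the maximum is the
supremum of `φ` over the nonempty compact fiber `f⁻¹(y)`). -/
theorem stmt17 (X Y : Type u) [TopologicalSpace X] [CompactSpace X] [T2Space X]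
    [TopologicalSpace Y] [CompactSpace Y] [T2Space Y]
    (f : X → Y) (hf : Continuous f) (hopen : IsOpenMap f) (hsurj : Function.Surjective f)
    (φ : X → ℝ) (hφ : Continuous φ) :
    Continuous fun y : Y => sSup (φ '' (f ⁻¹' {y})) :=
  stmt17_general hf.isProperMap hopen hsurj hφ
end
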